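/- arXiv:2605.30763 — 2 statements merged into one kernel-verified Lean document; each statement's English description precedes it below -/
import Mathlib

section
/- Consider N agents, each with a nonempty compact convex local constraint set U_i ⊆ ℝ^{n_i}, a coupling matrix A_i ∈ ℝ^{p×n_i} and a vector b_i ∈ ℝ^p, and a column-stochastic mixing matrix W = (w_{ij}) ∈ ℝ^{N×N}. Suppose sequences u_τ^i ∈ U_i and d_τ^i ∈ ℝ^p satisfy d_0^i = A_i u_0^i − b_i and d_{τ+1}^i = Σ_{j=1}^N w_{ij} d_τ^j + A_i u_{τ+1}^i − A_i u_τ^i for all i and τ. If for every agent i the tracking variable vanishes, d_τ^i → 0 as τ → ∞, and the primal iterates converge, u_τ^i → u_*^i, then the limit point is feasible for the coupling constraint: Σ_{i=1}^N (A_i u_*^i − b_i) = 0. -/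
/-!
Since the columns of `W` sum to one, the update preserves the identity
`∑ i, d τ i = ∑ i, (A i *ᵥ u τ i - b i)`, which holds at `τ = 0` by initialization: the tracking
variables always sum to the coupling-constraint violation. As `τ → ∞` the left side tends to `0`
and the right side, by continuity, to the violation at the limit point, so the latter is zero.
-/

open Matrix Filter Topology

/-- If the Tracking-ADMM tracking variables vanish and the primal iterates
converge, the limit point is feasible for the coupling constraint. -/
theorem tracking_admm_limit_feasibility
    (N p : ℕ) (hN : 0 < N) (n : Fin N → ℕ)
    (U : (i : Fin N) → Set (Fin (n i) → ℝ))
    (hUne : ∀ i, (U i).Nonempty)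
    (hUcpt : ∀ i, IsCompact (U i))
    (hUcvx : ∀ i, Convex ℝ (U i))
    (A : (i : Fin N) → Matrix (Fin p) (Fin (n i)) ℝ)
    (b : Fin N → (Fin p → ℝ))
    (W : Matrix (Fin N) (Fin N) ℝ)
    (hWnonneg : ∀ i j, 0 ≤ W i j)
    (hWcol : ∀ j, ∑ i, W i j = 1)
    (u : ℕ → (i : Fin N) → (Fin (n i) → ℝ))
    (d : ℕ → Fin N → (Fin p → ℝ))
    (hu : ∀ τ i, u τ i ∈ U i)
    (hd0 : ∀ i, d 0 i = (A i) *ᵥ (u 0 i) - b i)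
    (hdupd : ∀ τ i,
      d (τ + 1) i =
        (∑ j, W i j • d τ j) + (A i) *ᵥ (u (τ + 1) i) - (A i) *ᵥ (u τ i))
    (ustar : (i : Fin N) → (Fin (n i) → ℝ))
    (hdlim : ∀ i, Tendsto (fun τ => d τ i) atTop (𝓝 0))
    (hulim : ∀ i, Tendsto (fun τ => u τ i) atTop (𝓝 (ustar i))) :
    ∑ i, ((A i) *ᵥ (ustar i) - b i) = 0 := by
  -- Tracking invariant: column-stochasticity makes mixing preserve the sum of the `d τ i`.
  have inv : ∀ τ, ∑ i, d τ i = ∑ i, ((A i) *ᵥ (u τ i) - b i) := by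
    intro τ
    induction τ with
    | zero => exact Finset.sum_congr rfl fun i _ => hd0 i
    | succ τ ih =>
      have mix : ∑ i, ∑ j, W i j • d τ j = ∑ j, d τ j := by
        rw [Finset.sum_comm]
        refine Finset.sum_congr rfl fun j _ => ?_
        rw [← Finset.sum_smul, hWcol, one_smul]
      simp only [hdupd, Finset.sum_sub_distrib, Finset.sum_add_distrib, mix] at ih ⊢
      rw [ih]
      abel
  have h0 : Tendsto (fun τ => ∑ i, d τ i) atTop (𝓝 0) := by
    simpa using tendsto_finsetSum Finset.univ fun i _ => hdlim i
  have h1 : Tendsto (fun τ => ∑ i, d τ i) atTop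
      (𝓝 (∑ i, ((A i) *ᵥ (ustar i) - b i))) := by
    simp only [inv]
    refine tendsto_finsetSum Finset.univ fun i _ => Tendsto.sub_const ?_ (b i)
    have hc : Continuous fun v : Fin (n i) → ℝ => (A i) *ᵥ v :=
      continuous_const.matrix_mulVec continuous_id
    exact (hc.tendsto (ustar i)).comp (hulim i)
  exact tendsto_nhds_unique h1 h0
end

section
/- Let σ : ℝ → ℝ be convex and monotone non-decreasing. Consider a K-layer feedforward network on input y ∈ ℝ^n defined by z_1 = σ.(V_0 y + c_0) (σ applied componentwise) and, for k = 1,…,K−1, z_{k+1} = σ.(W_k z_k + V_k y + c_k), where each W_k ∈ ℝ^{m_{k+1}×m_k} has all entries non-negative and the matrices V_k ∈ ℝ^{m_{k+1}×n} and vectors c_k are arbitrary. Then every component of the output z_K is a convex function of the input y ∈ ℝ^n. -/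
open Matrix

/-!
By induction on the layer, every component of `z_k` is convex in the input. The pre-activation of
a layer is a non-negative combination of convex functions (`convexOn_mulVec_of_nonneg`) plus an
affine function of the input (`convexOn_mulVec_add_const`), hence convex, and composing a convex
function with a convex non-decreasing `σ` preserves convexity (`ConvexOn.comp_of_monotone`).
-/

theorem ConvexOn.comp_of_monotone {E : Type*} [AddCommGroup E] [Module ℝ E] {σ : ℝ → ℝ}
    {f : E → ℝ} (hσ : ConvexOn ℝ Set.univ σ) (hmono : Monotone σ)
    (hf : ConvexOn ℝ Set.univ f) : ConvexOn ℝ Set.univ (fun y => σ (f y)) := by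
  refine ⟨convex_univ, fun x _ y _ a b ha hb hab => ?_⟩
  exact (hmono (hf.2 (Set.mem_univ x) (Set.mem_univ y) ha hb hab)).trans
    (hσ.2 (Set.mem_univ _) (Set.mem_univ _) ha hb hab)

theorem convexOn_mulVec_add_const {p n : ℕ} (A : Matrix (Fin p) (Fin n) ℝ) (r : Fin p) (d : ℝ) :
    ConvexOn ℝ Set.univ (fun y : Fin n → ℝ => (A *ᵥ y) r + d) :=
  (((LinearMap.proj r).comp A.mulVecLin).convexOn convex_univ).add_const d

theorem convexOn_mulVec_of_nonneg {E : Type*} [AddCommGroup E] [Module ℝ E] {p q : ℕ}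
    (A : Matrix (Fin p) (Fin q) ℝ) (r : Fin p) (hA : ∀ s, 0 ≤ A r s) (g : E → Fin q → ℝ)
    (hg : ∀ s, ConvexOn ℝ Set.univ (fun y => g y s)) :
    ConvexOn ℝ Set.univ (fun y => (A *ᵥ g y) r) := by
  refine ⟨convex_univ, fun x _ y _ a b ha hb hab => ?_⟩
  simp only [Matrix.mulVec, dotProduct, smul_eq_mul, Finset.mul_sum, ← Finset.sum_add_distrib]
  refine Finset.sum_le_sum fun s _ => ?_
  have h := mul_le_mul_of_nonneg_left
    ((hg s).2 (Set.mem_univ x) (Set.mem_univ y) ha hb hab) (hA s)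
  simp only [smul_eq_mul] at h
  linarith

/-- Input-Convex Neural Network: with a convex, non-decreasing activation and
non-negative hidden-to-hidden weights, every component of the K-th layer is a
convex function of the input. -/
theorem icnn_output_convex
    (n K : ℕ) (hK : 1 ≤ K)
    (σ : ℝ → ℝ)
    (hσcvx : ConvexOn ℝ Set.univ σ)
    (hσmono : Monotone σ)
    (m : ℕ → ℕ)
    (W : (k : ℕ) → Matrix (Fin (m (k + 1))) (Fin (m k)) ℝ)
    (V : (k : ℕ) → Matrix (Fin (m (k + 1))) (Fin n) ℝ)
    (c : (k : ℕ) → Fin (m (k + 1)) → ℝ)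
    (hW : ∀ k, 1 ≤ k → k < K → ∀ r s, 0 ≤ W k r s)
    (z : (Fin n → ℝ) → (k : ℕ) → (Fin (m k) → ℝ))
    (hz1 : ∀ y, z y 1 = fun r => σ (((V 0) *ᵥ y) r + c 0 r))
    (hzrec : ∀ y k, 1 ≤ k → k < K →
      z y (k + 1) = fun r => σ (((W k) *ᵥ (z y k)) r + ((V k) *ᵥ y) r + c k r)) :
    ∀ r : Fin (m K), ConvexOn ℝ Set.univ (fun y : Fin n → ℝ => z y K r) := by
  -- Layers beyond `K` are unconstrained, so the induction carries the bound `k ≤ K`.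
  have key : ∀ k, 1 ≤ k → k ≤ K → ∀ r : Fin (m k),
      ConvexOn ℝ Set.univ (fun y : Fin n → ℝ => z y k r) := by
    intro k hk
    induction k, hk using Nat.le_induction with
    | base =>
      intro _ r
      simp only [hz1]
      exact hσcvx.comp_of_monotone hσmono (convexOn_mulVec_add_const (V 0) r (c 0 r))
    | succ k hk ih =>
      intro hkK r
      simp only [fun y => hzrec y k hk hkK, add_assoc]
      exact hσcvx.comp_of_monotone hσmono
        ((convexOn_mulVec_of_nonneg (W k) r (hW k hk hkK r) (fun y => z y k)
          (ih (Nat.le_of_succ_le hkK))).add (convexOn_mulVec_add_const (V k) r (c k r)))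
  exact key K hK le_rfl
end
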